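/- Let M be a representation of ĝ on which the central element c acts as multiplication by −4/3, and let v₀ ∈ M be a vacuum-type vector, i.e., x(n)·v₀ = 0 for all x ∈ {e, f, h} and all n ≥ 0. Define v_sing = f_sing·v₀, where f_sing = e(−1)·φ + (1/3)·e(−3) − (1/2)·h(−1)e(−2) + (1/2)·h(−2)e(−1) and φ = (3/4)·( e(−1)f(−1) + f(−1)e(−1) + (1/2)·h(−1)h(−1) ) (products denote composition of the module action operators). Then v_sing is a singular vector of ĝ-weight 2 for h(0): namely e(0)·v_sing = 0, x(n)·v_sing = 0 for all x ∈ {e, f, h} and all n ≥ 1, and h(0)·v_sing = 2·v_sing. -/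

import Mathlib

/-!
The positive part `n₊` of the affine algebra is generated by `e(0)` and `f(1)`
(`positive_modes_kill`), so only the actions of `e(0)`, `f(1)` and `h(0)` on `v_sing` have to be
computed, by commuting these modes to the right until they reach `v₀`.

* `h(0)` acts as a derivation and every monomial of `f_sing` has weight 2.
* `e(0)` commutes with `e(-1)`, `e(-3)` and the Casimir-type element `φ`; the contributions
  of `h(-1)e(-2)` and `h(-2)e(-1)` cancel because `e(-1)` and `e(-2)` commute.
* `f(1)` is where the level `k = -4/3` enters: `[f(1), φ] v₀ = (3/4)(2k + 4) f(-1) v₀ = f(-1) v₀`,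
  while `[f(1), e(-1)] φ v₀ = k φ v₀`; the resulting quadratic terms and the multiples of
  `h(-2) v₀` coming from the other three summands then add up to zero.
-/

noncomputable section

/- 𝔤 = sl₂(ℂ), written in coordinates with respect to the standard basis e, h, f:
   an element (a, b, c) stands for a·e + b·h + c·f. -/

/-- sl₂(ℂ) in coordinates (e-, h-, f-components). -/
abbrev sl2 : Type := ℂ × ℂ × ℂ

/-- The bracket of sl₂(ℂ) determined by [h,e] = 2e, [h,f] = −2f, [e,f] = h. -/
def sl2Bracket (x y : sl2) : sl2 :=
  (2 * (x.2.1 * y.1 - x.1 * y.2.1),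
   x.1 * y.2.2 - x.2.2 * y.1,
   2 * (x.2.2 * y.2.1 - x.2.1 * y.2.2))

/-- The trace form (x|y) = tr(xy) of sl₂(ℂ): (e|f) = (f|e) = 1, (h|h) = 2,
    all other pairings of basis elements vanish. -/
def sl2Form (x y : sl2) : ℂ := x.1 * y.2.2 + x.2.2 * y.1 + 2 * x.2.1 * y.2.1

/- The affine Lie algebra ĝ = (𝔤 ⊗ ℂ[t,t⁻¹]) ⊕ ℂc, with 𝔤 ⊗ ℂ[t,t⁻¹] realized
   as finitely supported functions ℤ →₀ 𝔤 (the degree-n coefficient of x ⊗ tⁿ). -/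

/-- The underlying ℂ-vector space of ĝ = (𝔤 ⊗ ℂ[t,t⁻¹]) ⊕ ℂc. -/
abbrev Aff : Type := (ℤ →₀ sl2) × ℂ

/-- The bracket of ĝ:
    [x⊗tⁿ, y⊗tᵐ] = [x,y]⊗tⁿ⁺ᵐ + n·(x|y)·δ_{n+m,0}·c, with c central. -/
def affBracket (x y : Aff) : Aff :=
  (x.1.sum fun n xn => y.1.sum fun m ym => Finsupp.single (n + m) (sl2Bracket xn ym),
   x.1.sum fun n xn => y.1.sum fun m ym =>
     if n + m = 0 then (n : ℂ) * sl2Form xn ym else 0)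

/-- The element e(n) = e ⊗ tⁿ of ĝ. -/
def atE (n : ℤ) : Aff := (Finsupp.single n (1, 0, 0), 0)

/-- The element h(n) = h ⊗ tⁿ of ĝ. -/
def atH (n : ℤ) : Aff := (Finsupp.single n (0, 1, 0), 0)

/-- The element f(n) = f ⊗ tⁿ of ĝ. -/
def atF (n : ℤ) : Aff := (Finsupp.single n (0, 0, 1), 0)

/-- The canonical central element c of ĝ. -/
def cc : Aff := (0, 1)

/-! ### Brackets of the basis elements -/

lemma affBracket_single (n m : ℤ) (x y : sl2) :
    affBracket (Finsupp.single n x, 0) (Finsupp.single m y, 0) =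
      (Finsupp.single (n + m) (sl2Bracket x y),
        if n + m = 0 then (n : ℂ) * sl2Form x y else 0) := by
  unfold affBracket
  dsimp only
  rw [Finsupp.sum_single_index, Finsupp.sum_single_index, Finsupp.sum_single_index,
    Finsupp.sum_single_index]
  all_goals simp [sl2Bracket, sl2Form, ← Prod.zero_eq_mk]

lemma affBracket_E_E (n m : ℤ) : affBracket (atE n) (atE m) = 0 := by
  simp [atE, affBracket_single, sl2Bracket, sl2Form]

lemma affBracket_H_E (n m : ℤ) : affBracket (atH n) (atE m) = (2 : ℂ) • atE (n + m) := by
  simp [atE, atH, affBracket_single, sl2Bracket, sl2Form]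

lemma affBracket_H_F (n m : ℤ) : affBracket (atH n) (atF m) = (-2 : ℂ) • atF (n + m) := by
  simp [atF, atH, affBracket_single, sl2Bracket, sl2Form, ← Finsupp.single_neg]

lemma affBracket_E_F (n m : ℤ) : affBracket (atE n) (atF m) =
    atH (n + m) + (if n + m = 0 then (n : ℂ) else 0) • cc := by
  split_ifs with h <;> simp [atE, atF, atH, cc, affBracket_single, sl2Bracket, sl2Form, h]

lemma affBracket_F_F (n m : ℤ) : affBracket (atF n) (atF m) = 0 := by
  simp [atF, affBracket_single, sl2Bracket, sl2Form]

lemma affBracket_H_H (n m : ℤ) : affBracket (atH n) (atH m) =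
    (if n + m = 0 then (n : ℂ) * 2 else 0) • cc := by
  split_ifs with h <;>
    simp [atH, cc, affBracket_single, sl2Bracket, sl2Form, h, ← Prod.zero_eq_mk]

/-! ### Commutation relations acting on a vector of a level `-4/3` representation -/

section Rep

variable {M : Type} [AddCommGroup M] [Module ℂ M] {ρ : Aff →ₗ[ℂ] Module.End ℂ M}

lemma rho_swap (hrep : ∀ x y : Aff, ρ (affBracket x y) = ρ x * ρ y - ρ y * ρ x)
    (x y : Aff) (v : M) : ρ x (ρ y v) = ρ y (ρ x v) + ρ (affBracket x y) v := by
  simp [hrep]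

lemma rho_E_E (hrep : ∀ x y : Aff, ρ (affBracket x y) = ρ x * ρ y - ρ y * ρ x)
    (n m : ℤ) (v : M) : ρ (atE n) (ρ (atE m) v) = ρ (atE m) (ρ (atE n) v) := by
  simp [rho_swap hrep (atE n), affBracket_E_E]

lemma rho_F_F (hrep : ∀ x y : Aff, ρ (affBracket x y) = ρ x * ρ y - ρ y * ρ x)
    (n m : ℤ) (v : M) : ρ (atF n) (ρ (atF m) v) = ρ (atF m) (ρ (atF n) v) := by
  simp [rho_swap hrep (atF n), affBracket_F_F]

lemma rho_H_E (hrep : ∀ x y : Aff, ρ (affBracket x y) = ρ x * ρ y - ρ y * ρ x)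
    (n m : ℤ) (v : M) :
    ρ (atH n) (ρ (atE m) v) = ρ (atE m) (ρ (atH n) v) + (2 : ℂ) • ρ (atE (n + m)) v := by
  simp [rho_swap hrep (atH n), affBracket_H_E]

lemma rho_E_H (hrep : ∀ x y : Aff, ρ (affBracket x y) = ρ x * ρ y - ρ y * ρ x)
    (n m : ℤ) (v : M) :
    ρ (atE n) (ρ (atH m) v) = ρ (atH m) (ρ (atE n) v) - (2 : ℂ) • ρ (atE (n + m)) v := by
  rw [rho_H_E hrep, add_comm m n]; abel

lemma rho_H_F (hrep : ∀ x y : Aff, ρ (affBracket x y) = ρ x * ρ y - ρ y * ρ x)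
    (n m : ℤ) (v : M) :
    ρ (atH n) (ρ (atF m) v) = ρ (atF m) (ρ (atH n) v) - (2 : ℂ) • ρ (atF (n + m)) v := by
  simp [rho_swap hrep (atH n), affBracket_H_F, sub_eq_add_neg]

lemma rho_F_H (hrep : ∀ x y : Aff, ρ (affBracket x y) = ρ x * ρ y - ρ y * ρ x)
    (n m : ℤ) (v : M) :
    ρ (atF n) (ρ (atH m) v) = ρ (atH m) (ρ (atF n) v) + (2 : ℂ) • ρ (atF (n + m)) v := by
  rw [rho_H_F hrep, add_comm m n]; abel

lemma rho_E_F (hrep : ∀ x y : Aff, ρ (affBracket x y) = ρ x * ρ y - ρ y * ρ x)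
    (hlevel : ρ cc = (-4 / 3 : ℂ) • (1 : Module.End ℂ M)) (n m : ℤ) (v : M) :
    ρ (atE n) (ρ (atF m) v) = ρ (atF m) (ρ (atE n) v) + ρ (atH (n + m)) v
      + ((if n + m = 0 then (n : ℂ) else 0) * (-4 / 3)) • v := by
  rw [rho_swap hrep (atE n), affBracket_E_F, map_add, map_smul, hlevel, smul_smul, add_assoc]
  rfl

lemma rho_F_E (hrep : ∀ x y : Aff, ρ (affBracket x y) = ρ x * ρ y - ρ y * ρ x)
    (hlevel : ρ cc = (-4 / 3 : ℂ) • (1 : Module.End ℂ M)) (n m : ℤ) (v : M) :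
    ρ (atF n) (ρ (atE m) v) = ρ (atE m) (ρ (atF n) v) - ρ (atH (n + m)) v
      - ((if n + m = 0 then (m : ℂ) else 0) * (-4 / 3)) • v := by
  rw [rho_E_F hrep hlevel, add_comm m n]; abel

lemma rho_H_H (hrep : ∀ x y : Aff, ρ (affBracket x y) = ρ x * ρ y - ρ y * ρ x)
    (hlevel : ρ cc = (-4 / 3 : ℂ) • (1 : Module.End ℂ M)) (n m : ℤ) (v : M) :
    ρ (atH n) (ρ (atH m) v) = ρ (atH m) (ρ (atH n) v)
      + ((if n + m = 0 then (n : ℂ) * 2 else 0) * (-4 / 3)) • v := by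
  rw [rho_swap hrep (atH n), affBracket_H_H, map_smul, hlevel, smul_smul]
  rfl

/-- The subalgebra spanned by the `e(n)`, `f(n)`, `h(n)` with `n ≥ 1` lies in the one generated by
`e(0)` and `f(1)`: first `h(1) = [e(0), f(1)]` and `2 e(1) = [h(1), e(0)]`, and then degrees are
raised by `2 e(n+1) = [h(1), e(n)]`, `-2 f(n+1) = [h(1), f(n)]`, `h(n+1) = [e(1), f(n)]`. -/
lemma positive_modes_kill (hrep : ∀ x y : Aff, ρ (affBracket x y) = ρ x * ρ y - ρ y * ρ x)
    (hlevel : ρ cc = (-4 / 3 : ℂ) • (1 : Module.End ℂ M)) (w : M)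
    (he : ρ (atE 0) w = 0) (hf : ρ (atF 1) w = 0) (n : ℤ) (hn : 1 ≤ n) :
    ρ (atE n) w = 0 ∧ ρ (atF n) w = 0 ∧ ρ (atH n) w = 0 := by
  have hh : ρ (atH 1) w = 0 := by
    simpa [he, hf] using (rho_E_F hrep hlevel 0 1 w).symm
  have he1 : ρ (atE 1) w = 0 := by
    simpa [he, hh] using (rho_H_E hrep 1 0 w).symm
  induction n, hn using Int.leInduction with
  | base => exact ⟨he1, hf, hh⟩
  | succ n hn ih =>
    obtain ⟨ihe, ihf, -⟩ := ih
    have hne : 1 + n ≠ 0 := by omega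
    rw [add_comm n 1]
    refine ⟨?_, ?_, ?_⟩
    · simpa [ihe, hh] using (rho_H_E hrep 1 n w).symm
    · simpa [ihf, hh] using rho_H_F hrep 1 n w
    · simpa [ihf, he1, hne] using (rho_E_F hrep hlevel 1 n w).symm

end Rep

/-- Let M be a representation of ĝ (given by a ℂ-linear map ρ : ĝ → End(M)
    satisfying ρ([x,y]) = ρ(x)ρ(y) − ρ(y)ρ(x)) on which the central element c acts
    as multiplication by −4/3, and let v₀ ∈ M be a vacuum-type vector:
    e(n)·v₀ = f(n)·v₀ = h(n)·v₀ = 0 for all n ≥ 0.  Put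
      φ = (3/4)·( e(−1)f(−1) + f(−1)e(−1) + (1/2)·h(−1)h(−1) ),
      f_sing = e(−1)·φ + (1/3)·e(−3) − (1/2)·h(−1)e(−2) + (1/2)·h(−2)e(−1),
      v_sing = f_sing·v₀.
    Then v_sing is a singular vector of h(0)-weight 2:
      e(0)·v_sing = 0,  e(n)·v_sing = f(n)·v_sing = h(n)·v_sing = 0 for n ≥ 1,
      and h(0)·v_sing = 2·v_sing. -/
theorem stmt5 {M : Type} [AddCommGroup M] [Module ℂ M]
    (ρ : Aff →ₗ[ℂ] Module.End ℂ M)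
    (hrep : ∀ x y : Aff, ρ (affBracket x y) = ρ x * ρ y - ρ y * ρ x)
    (hlevel : ρ cc = (-4 / 3 : ℂ) • (1 : Module.End ℂ M))
    (v₀ : M)
    (hvac : ∀ n : ℤ, 0 ≤ n →
      ρ (atE n) v₀ = 0 ∧ ρ (atF n) v₀ = 0 ∧ ρ (atH n) v₀ = 0) :
    letI φ : Module.End ℂ M :=
      (3 / 4 : ℂ) • (ρ (atE (-1)) * ρ (atF (-1)) + ρ (atF (-1)) * ρ (atE (-1))
        + (1 / 2 : ℂ) • (ρ (atH (-1)) * ρ (atH (-1))))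
    letI fsing : Module.End ℂ M :=
      ρ (atE (-1)) * φ + (1 / 3 : ℂ) • ρ (atE (-3))
        - (1 / 2 : ℂ) • (ρ (atH (-1)) * ρ (atE (-2)))
        + (1 / 2 : ℂ) • (ρ (atH (-2)) * ρ (atE (-1)))
    letI vsing : M := fsing v₀
    ρ (atE 0) vsing = 0 ∧
    (∀ n : ℤ, 1 ≤ n →
      ρ (atE n) vsing = 0 ∧ ρ (atF n) vsing = 0 ∧ ρ (atH n) vsing = 0) ∧
    ρ (atH 0) vsing = (2 : ℂ) • vsing := by
  have hE (n : ℤ) (hn : 0 ≤ n) : ρ (atE n) v₀ = 0 := (hvac n hn).1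
  have hF (n : ℤ) (hn : 0 ≤ n) : ρ (atF n) v₀ = 0 := (hvac n hn).2.1
  have hH (n : ℤ) (hn : 0 ≤ n) : ρ (atH n) v₀ = 0 := (hvac n hn).2.2
  have hE0 := hE 0 le_rfl
  have hF0 := hF 0 le_rfl
  have hH0 := hH 0 le_rfl
  have hF1 := hF 1 zero_le_one
  set vsing : M := (ρ (atE (-1)) * ((3 / 4 : ℂ) • (ρ (atE (-1)) * ρ (atF (-1))
        + ρ (atF (-1)) * ρ (atE (-1)) + (1 / 2 : ℂ) • (ρ (atH (-1)) * ρ (atH (-1)))))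
      + (1 / 3 : ℂ) • ρ (atE (-3)) - (1 / 2 : ℂ) • (ρ (atH (-1)) * ρ (atE (-2)))
      + (1 / 2 : ℂ) • (ρ (atH (-2)) * ρ (atE (-1)))) v₀ with hvs
  have hv : vsing = (3 / 4 : ℂ) • (ρ (atE (-1)) (ρ (atE (-1)) (ρ (atF (-1)) v₀))
        + ρ (atE (-1)) (ρ (atF (-1)) (ρ (atE (-1)) v₀))
        + (1 / 2 : ℂ) • ρ (atE (-1)) (ρ (atH (-1)) (ρ (atH (-1)) v₀)))
      + (1 / 3 : ℂ) • ρ (atE (-3)) v₀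
      - (1 / 2 : ℂ) • ρ (atH (-1)) (ρ (atE (-2)) v₀)
      + (1 / 2 : ℂ) • ρ (atH (-2)) (ρ (atE (-1)) v₀) := by
    simp [hvs]
  -- Each of the three modes below is moved to the right through the negative modes onto `v₀`.
  have he : ρ (atE 0) vsing = 0 := by
    simp only [hv, map_add, map_sub, map_smul, rho_E_E hrep 0, rho_E_H hrep 0,
      rho_E_F hrep hlevel 0, hE0]
    norm_num
    -- The remaining monomials are reordered to a common normal form.
    rw [rho_E_E hrep (-2) (-1)]
    simp only [rho_H_E hrep (-1) (-1)]
    norm_num [rho_E_H hrep (-1) (-1), rho_E_E hrep (-2) (-1)]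
    module
  have hf : ρ (atF 1) vsing = 0 := by
    simp only [hv, map_add, map_sub, map_smul, rho_F_E hrep hlevel 1, rho_F_H hrep 1,
      rho_F_F hrep 1, hF1]
    norm_num [rho_F_E hrep hlevel 0, rho_F_H hrep 0, rho_F_F hrep 0, rho_H_E hrep 0,
      rho_H_F hrep 0, rho_H_H hrep hlevel 0, hF0, hH0]
    module
  have hh : ρ (atH 0) vsing = (2 : ℂ) • vsing := by
    simp only [hv, map_add, map_sub, map_smul, rho_H_E hrep 0, rho_H_F hrep 0,
      rho_H_H hrep hlevel 0, hH0]
    norm_num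
    module
  exact ⟨he, positive_modes_kill hrep hlevel vsing he hf, hh⟩
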